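/- Let (λ_k)_{k≥1} and (μ_k)_{k≥1} be strictly increasing sequences of positive real numbers tending to infinity, and let (a_k), (b_k) be complex sequences such that the series Σ a_k and Σ b_k converge (i.e., their partial sums converge). Let (ν_k)_{k≥1} be a strictly increasing sequence of real numbers tending to infinity whose range is exactly the set {λ_i + μ_j : i, j ≥ 1}, and for each k define c_k = Σ_{(i,j) : λ_i + μ_j = ν_k} a_i·b_j (a finite sum, since each ν_k has only finitely many such representations). If the series Σ c_k converges, then Σ_{k} c_k = (Σ_{k} a_k)·(Σ_{k} b_k). -/

import Mathlib

open Filter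

/-! Write `S_λ(x) = ∑_{λ_i ≤ x} a_i`, and `S_μ`, `S_ν` likewise. For `l, m ≥ 0` one has
`∫₀ᵀ 1[l + m ≤ x] dx = max (T - l - m) 0 = ∫₀ᵀ 1[l ≤ x] 1[m ≤ T - x] dx`, so bilinearity gives
`∫₀ᵀ S_ν(x) dx = ∫₀ᵀ S_λ(x) S_μ(T - x) dx`. Divided by `T`, the right-hand side tends to `A B` by
dominated convergence, so the means of `S_ν` always tend to `A B`; if `∑ c_k` converges to `C`,
they tend to `C` as well. Translating `λ`, `μ` and `ν` reduces to non-negative exponents. -/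

section

open MeasureTheory Set Topology

variable {ι κ M E F G : Type*} [AddCommMonoid M]

/-- The summatory function `x ↦ ∑_{lam i ≤ x} a i` of the Dirichlet series with exponents `lam` and
coefficients `a`. The index type is arbitrary, so that the formal product can also be treated as a
series indexed by pairs. The value is the intended one when `{i | lam i ≤ x}` is finite. -/
noncomputable def summatory (lam : ι → ℝ) (a : ι → M) (x : ℝ) : M :=
  ∑ᶠ i ∈ {i | lam i ≤ x}, a i

theorem summatory_eq_sum_indicator {lam : ι → ℝ} (a : ι → M) {s : Finset ι} {T x : ℝ}
    (hs : ∀ i, lam i ≤ T → i ∈ s) (hx : x ≤ T) :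
    summatory lam a x = ∑ i ∈ s, (Ici (lam i)).indicator (fun _ => a i) x := by
  classical
  have hset : {i | lam i ≤ x} = ↑(s.filter fun i => lam i ≤ x) := by
    ext i
    simpa using fun hi => hs i (hi.trans hx)
  simp only [summatory, hset, finsum_mem_coe_finset, Finset.sum_filter, indicator_apply, mem_Ici]

theorem summatory_finsum_fiber {w : ι → ℝ} (z : ι → M) {nu : κ → ℝ} (hnu : nu.Injective)
    (hw : ∀ i, w i ∈ range nu) {x : ℝ} (hwfin : {i | w i ≤ x}.Finite)
    (hnufin : {k | nu k ≤ x}.Finite) :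
    summatory nu (fun k => ∑ᶠ i ∈ {i | w i = nu k}, z i) x = summatory w z x := by
  have hunion : {i | w i ≤ x} = ⋃ k ∈ {k | nu k ≤ x}, {i | w i = nu k} := by
    ext i
    obtain ⟨k, hk⟩ := hw i
    simp [← hk, hnu.eq_iff]
  have hdisjoint : {k | nu k ≤ x}.PairwiseDisjoint fun k => {i | w i = nu k} :=
    fun k _ l _ hkl => disjoint_left.2 fun i hik hil => hkl (hnu (hik.symm.trans hil))
  rw [summatory, summatory, hunion, finsum_mem_biUnion hdisjoint hnufin]
  exact fun k hk => hwfin.subset fun i hi => (hi : w i = nu k).trans_le hk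

theorem finite_setOf_le {lam : ℕ → ℝ} (htop : Tendsto lam atTop atTop) (x : ℝ) :
    {i | lam i ≤ x}.Finite := by
  simpa [← Nat.cofinite_eq_atTop, eventually_cofinite] using htop.eventually_gt_atTop x

section Sequence

/-- The least index at which `lam` exceeds `x`, which for a monotone unbounded `lam` is the
number of terms that are at most `x`. -/
noncomputable def countLE (lam : ℕ → ℝ) (x : ℝ) : ℕ := sInf {n | x < lam n}

variable {lam : ℕ → ℝ} (hlam : Monotone lam) (htop : Tendsto lam atTop atTop)
include hlam htop

theorem lt_countLE_iff {i : ℕ} {x : ℝ} : i < countLE lam x ↔ lam i ≤ x := by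
  refine ⟨fun h => not_lt.1 (Nat.notMem_of_lt_sInf h), fun h => hlam.reflect_lt (h.trans_lt ?_)⟩
  exact Nat.sInf_mem (htop.eventually_gt_atTop x).exists

theorem monotone_countLE : Monotone (countLE lam) := fun _ _ hxy =>
  le_of_forall_lt fun _ hi =>
    (lt_countLE_iff hlam htop).2 (((lt_countLE_iff hlam htop).1 hi).trans hxy)

theorem tendsto_countLE : Tendsto (countLE lam) atTop atTop :=
  tendsto_atTop_atTop.2 fun i => ⟨lam i, fun _ hx => ((lt_countLE_iff hlam htop).2 hx).le⟩

theorem summatory_eq_sum_range (a : ℕ → M) :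
    summatory lam a = (fun n => ∑ i ∈ Finset.range n, a i) ∘ countLE lam := by
  ext x
  have hset : {i | lam i ≤ x} = ↑(Finset.range (countLE lam x)) := by
    ext i
    simp [lt_countLE_iff hlam htop]
  simp only [summatory, hset, finsum_mem_coe_finset, Function.comp_apply]

theorem stronglyMeasurable_summatory [TopologicalSpace M] (a : ℕ → M) :
    StronglyMeasurable (summatory lam a) := by
  rw [summatory_eq_sum_range hlam htop]
  exact StronglyMeasurable.of_discrete.comp_measurable (monotone_countLE hlam htop).measurable

theorem tendsto_summatory [TopologicalSpace M] {a : ℕ → M} {A : M}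
    (hA : Tendsto (fun n => ∑ k ∈ Finset.range n, a k) atTop (𝓝 A)) :
    Tendsto (summatory lam a) atTop (𝓝 A) := by
  rw [summatory_eq_sum_range hlam htop]
  exact hA.comp (tendsto_countLE hlam htop)

theorem exists_norm_summatory_le [SeminormedAddCommGroup E] {a : ℕ → E} {A : E}
    (hA : Tendsto (fun n => ∑ k ∈ Finset.range n, a k) atTop (𝓝 A)) :
    ∃ K, ∀ x, ‖summatory lam a x‖ ≤ K := by
  obtain ⟨K, hK⟩ := (Metric.isBounded_range_of_tendsto _ hA).exists_norm_le
  rw [summatory_eq_sum_range hlam htop]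
  exact ⟨K, fun x => hK _ (mem_range_self _)⟩

end Sequence

variable [NormedAddCommGroup E] [NormedAddCommGroup F] [NormedAddCommGroup G]

theorem intervalIntegrable_indicator_const {s : Set ℝ} (hs : MeasurableSet s) (v : E) (p q : ℝ) :
    IntervalIntegrable (s.indicator fun _ => v) volume p q :=
  intervalIntegrable_iff.2 ((intervalIntegrable_iff.1 intervalIntegrable_const).indicator hs)

variable [NormedSpace ℝ E] [NormedSpace ℝ F] [NormedSpace ℝ G]

section Convolution

theorem integral_indicator_Icc_const [CompleteSpace E] {p q l r : ℝ} (hpq : p ≤ q) (hl : p ≤ l)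
    (hr : r ≤ q) (v : E) :
    ∫ x in p..q, (Icc l r).indicator (fun _ => v) x = max (r - l) 0 • v := by
  rw [intervalIntegral.integral_of_le hpq, ← integral_Icc_eq_integral_Ioc,
    setIntegral_indicator measurableSet_Icc, inter_eq_right.2 (Icc_subset_Icc hl hr),
    setIntegral_const, Real.volume_real_Icc]

theorem integral_summatory [CompleteSpace E] {lam : ι → ℝ} (hlam : ∀ i, 0 ≤ lam i) (a : ι → E)
    {s : Finset ι} {T : ℝ} (hT : 0 ≤ T) (hs : ∀ i, lam i ≤ T → i ∈ s) :
    ∫ x in 0..T, summatory lam a x = ∑ i ∈ s, max (T - lam i) 0 • a i := by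
  have hsum : EqOn (summatory lam a)
      (fun x => ∑ i ∈ s, (Icc (lam i) T).indicator (fun _ => a i) x) (uIcc 0 T) := by
    intro x hx
    have hxT : x ≤ T := (uIcc_of_le hT ▸ hx).2
    simp only [summatory_eq_sum_indicator a hs hxT, indicator_apply, mem_Ici, mem_Icc, hxT,
      and_true]
  rw [intervalIntegral.integral_congr hsum, intervalIntegral.integral_finsetSum fun i _ =>
    intervalIntegrable_indicator_const measurableSet_Icc _ _ _]
  exact Finset.sum_congr rfl fun i _ => integral_indicator_Icc_const hT (hlam i) le_rfl _

variable (L : E →L[ℝ] F →L[ℝ] G)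

theorem bilin_indicator_Ici_indicator_Ici_sub (v : E) (w : F) (l m T x : ℝ) :
    L ((Ici l).indicator (fun _ => v) x) ((Ici m).indicator (fun _ => w) (T - x)) =
      (Icc l (T - m)).indicator (fun _ => L v w) x := by
  by_cases hl : l ≤ x <;> by_cases hm : m ≤ T - x <;> simp [hl, hm, le_sub_comm (a := x)]

variable {lam : ι → ℝ} {mu : κ → ℝ} (hlam : ∀ i, 0 ≤ lam i) (hmu : ∀ j, 0 ≤ mu j)
  (a : ι → E) (b : κ → F)
include hlam hmu

theorem integral_bilin_summatory_sub [CompleteSpace G] {s : Finset ι} {t : Finset κ} {T : ℝ}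
    (hT : 0 ≤ T) (hs : ∀ i, lam i ≤ T → i ∈ s) (ht : ∀ j, mu j ≤ T → j ∈ t) :
    ∫ x in 0..T, L (summatory lam a x) (summatory mu b (T - x)) =
      ∑ p ∈ s ×ˢ t, max (T - (lam p.1 + mu p.2)) 0 • L (a p.1) (b p.2) := by
  have hsum : EqOn (fun x => L (summatory lam a x) (summatory mu b (T - x)))
      (fun x => ∑ p ∈ s ×ˢ t,
        (Icc (lam p.1) (T - mu p.2)).indicator (fun _ => L (a p.1) (b p.2)) x) (uIcc 0 T) := by
    intro x hx
    obtain ⟨hx0, hxT⟩ := uIcc_of_le hT ▸ hx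
    simp only [summatory_eq_sum_indicator a hs hxT,
      summatory_eq_sum_indicator b ht (sub_le_self T hx0), map_sum, sum_apply,
      bilin_indicator_Ici_indicator_Ici_sub, Finset.sum_product_right]
  rw [intervalIntegral.integral_congr hsum, intervalIntegral.integral_finsetSum fun p _ =>
    intervalIntegrable_indicator_const measurableSet_Icc _ _ _]
  refine Finset.sum_congr rfl fun p _ => ?_
  rw [integral_indicator_Icc_const hT (hlam p.1) (sub_le_self T (hmu p.2)), sub_sub,
    add_comm (mu p.2)]

theorem setOf_add_le_subset_prod (T : ℝ) :
    {p : ι × κ | lam p.1 + mu p.2 ≤ T} ⊆ {i | lam i ≤ T} ×ˢ {j | mu j ≤ T} := fun p hp =>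
  ⟨(le_add_of_nonneg_right (hmu p.2)).trans hp, (le_add_of_nonneg_left (hlam p.1)).trans hp⟩

theorem integral_summatory_prod [CompleteSpace G] {T : ℝ} (hT : 0 ≤ T)
    (hlamfin : {i | lam i ≤ T}.Finite) (hmufin : {j | mu j ≤ T}.Finite) :
    ∫ x in 0..T, summatory (fun p : ι × κ => lam p.1 + mu p.2) (fun p => L (a p.1) (b p.2)) x =
      ∫ x in 0..T, L (summatory lam a x) (summatory mu b (T - x)) := by
  rw [integral_bilin_summatory_sub L hlam hmu a b hT (fun i => hlamfin.mem_toFinset.2)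
    fun j => hmufin.mem_toFinset.2]
  refine integral_summatory (fun p : ι × κ => add_nonneg (hlam p.1) (hmu p.2)) _ hT fun p hp => ?_
  simpa using setOf_add_le_subset_prod hlam hmu T hp

end Convolution

section Mean

theorem tendsto_inv_smul_integral_bilin_sub [CompleteSpace G] (L : E →L[ℝ] F →L[ℝ] G) {f : ℝ → E}
    {g : ℝ → F} (hf : StronglyMeasurable f) (hg : StronglyMeasurable g) (hfK : ∃ K, ∀ x, ‖f x‖ ≤ K)
    (hgK : ∃ K, ∀ x, ‖g x‖ ≤ K) {A : E} {B : F} (hA : Tendsto f atTop (𝓝 A))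
    (hB : Tendsto g atTop (𝓝 B)) :
    Tendsto (fun T : ℝ => T⁻¹ • ∫ x in 0..T, L (f x) (g (T - x))) atTop (𝓝 (L A B)) := by
  obtain ⟨K, hK⟩ := hfK
  obtain ⟨K', hK'⟩ := hgK
  have hrescale : ∀ᶠ T : ℝ in atTop, ∫ s in (0 : ℝ)..1, L (f (T * s)) (g (T * (1 - s))) =
      T⁻¹ • ∫ x in 0..T, L (f x) (g (T - x)) := by
    filter_upwards [eventually_ne_atTop 0] with T hT
    simpa [mul_sub] using intervalIntegral.integral_comp_mul_left (a := 0) (b := 1)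
      (fun x => L (f x) (g (T - x))) hT
  have hmeas (T : ℝ) : StronglyMeasurable fun s : ℝ => L (f (T * s)) (g (T * (1 - s))) :=
    L.continuous₂.comp_stronglyMeasurable
      ((hf.comp_measurable (by fun_prop)).prodMk (hg.comp_measurable (by fun_prop)))
  have hbound (T s : ℝ) : ‖L (f (T * s)) (g (T * (1 - s)))‖ ≤ ‖L‖ * K * K' :=
    L.le_of_opNorm₂_le_of_le le_rfl (hK _) (hK' _)
  have hlim {s : ℝ} (hs : s ∈ Ioo (0 : ℝ) 1) :
      Tendsto (fun T : ℝ => L (f (T * s)) (g (T * (1 - s)))) atTop (𝓝 (L A B)) :=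
    (L.continuous₂.tendsto (A, B)).comp
      ((hA.comp (tendsto_id.atTop_mul_const hs.1)).prodMk_nhds
        (hB.comp (tendsto_id.atTop_mul_const (sub_pos.2 hs.2))))
  have hmain := intervalIntegral.tendsto_integral_filter_of_dominated_convergence
    (μ := volume) (a := 0) (b := 1) (f := fun _ => L A B) (fun _ => ‖L‖ * K * K')
    (.of_forall fun T => (hmeas T).aestronglyMeasurable)
    (.of_forall fun T => .of_forall fun s _ => hbound T s) intervalIntegrable_const <| by
      filter_upwards [Measure.ae_ne volume 1] with s hs1 hs
      rw [uIoc_of_le zero_le_one] at hs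
      exact hlim ⟨hs.1, hs.2.lt_of_ne hs1⟩
  simpa using hmain.congr' hrescale

theorem tendsto_inv_smul_integral [CompleteSpace E] {f : ℝ → E} (hf : StronglyMeasurable f)
    (hfK : ∃ K, ∀ x, ‖f x‖ ≤ K) {A : E} (hA : Tendsto f atTop (𝓝 A)) :
    Tendsto (fun T : ℝ => T⁻¹ • ∫ x in 0..T, f x) atTop (𝓝 A) := by
  simpa using tendsto_inv_smul_integral_bilin_sub (ContinuousLinearMap.lsmul ℝ ℝ).flip hf
    (stronglyMeasurable_const (b := (1 : ℝ))) hfK ⟨1, fun _ => by simp⟩ hA tendsto_const_nhds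

end Mean

section FormalProduct

variable [CompleteSpace G] (L : E →L[ℝ] F →L[ℝ] G)
  {lam mu : ℕ → ℝ} (hlam : Monotone lam) (hmu : Monotone mu)
  (hlamtop : Tendsto lam atTop atTop) (hmutop : Tendsto mu atTop atTop)
  {a : ℕ → E} {b : ℕ → F} {A : E} {B : F}
  (hA : Tendsto (fun n => ∑ k ∈ Finset.range n, a k) atTop (𝓝 A))
  (hB : Tendsto (fun n => ∑ k ∈ Finset.range n, b k) atTop (𝓝 B))
include hlam hmu hlamtop hmutop hA hB

theorem tendsto_inv_smul_integral_summatory_prod (hlam0 : ∀ i, 0 ≤ lam i) (hmu0 : ∀ j, 0 ≤ mu j) :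
    Tendsto (fun T : ℝ => T⁻¹ • ∫ x in 0..T,
      summatory (fun p : ℕ × ℕ => lam p.1 + mu p.2) (fun p => L (a p.1) (b p.2)) x)
      atTop (𝓝 (L A B)) := by
  refine (tendsto_inv_smul_integral_bilin_sub L (stronglyMeasurable_summatory hlam hlamtop a)
    (stronglyMeasurable_summatory hmu hmutop b) (exists_norm_summatory_le hlam hlamtop hA)
    (exists_norm_summatory_le hmu hmutop hB) (tendsto_summatory hlam hlamtop hA)
    (tendsto_summatory hmu hmutop hB)).congr' ?_
  filter_upwards [eventually_ge_atTop 0] with T hT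
  rw [integral_summatory_prod L hlam0 hmu0 a b hT (finite_setOf_le hlamtop T)
    (finite_setOf_le hmutop T)]

variable {nu : ℕ → ℝ} (hnu : StrictMono nu) (hmem : ∀ i j, lam i + mu j ∈ range nu) {C : G}
include hnu hmem

theorem formal_product_eq_of_nonneg (hlam0 : ∀ i, 0 ≤ lam i) (hmu0 : ∀ j, 0 ≤ mu j)
    (hC : Tendsto (fun n => ∑ k ∈ Finset.range n,
      ∑ᶠ p ∈ {p : ℕ × ℕ | lam p.1 + mu p.2 = nu k}, L (a p.1) (b p.2)) atTop (𝓝 C)) :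
    C = L A B := by
  have hnutop : Tendsto nu atTop atTop := tendsto_atTop_atTop_of_monotone hnu.monotone fun x => by
    obtain ⟨i, hi⟩ := (hlamtop.eventually_ge_atTop x).exists
    obtain ⟨k, hk⟩ := hmem i 0
    exact ⟨k, hk ▸ hi.trans (le_add_of_nonneg_right (hmu0 0))⟩
  have hmean := tendsto_inv_smul_integral (stronglyMeasurable_summatory hnu.monotone hnutop _)
    (exists_norm_summatory_le hnu.monotone hnutop hC) (tendsto_summatory hnu.monotone hnutop hC)
  have hregroup : summatory nu (fun k =>
      ∑ᶠ p ∈ {p : ℕ × ℕ | lam p.1 + mu p.2 = nu k}, L (a p.1) (b p.2)) =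
      summatory (fun p : ℕ × ℕ => lam p.1 + mu p.2) fun p => L (a p.1) (b p.2) := funext fun x =>
    summatory_finsum_fiber _ hnu.injective (fun p => hmem p.1 p.2)
      (((finite_setOf_le hlamtop x).prod (finite_setOf_le hmutop x)).subset
        (setOf_add_le_subset_prod hlam0 hmu0 x)) (finite_setOf_le hnutop x)
  rw [hregroup] at hmean
  exact tendsto_nhds_unique hmean
    (tendsto_inv_smul_integral_summatory_prod L hlam hmu hlamtop hmutop hA hB hlam0 hmu0)

theorem dirichlet_formal_product_at_zero_general {c : ℕ → G}
    (hc : ∀ k, c k = ∑ᶠ p ∈ {p : ℕ × ℕ | lam p.1 + mu p.2 = nu k}, L (a p.1) (b p.2))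
    (hC : Tendsto (fun n => ∑ k ∈ Finset.range n, c k) atTop (𝓝 C)) :
    C = L A B := by
  have hshift (x y z : ℝ) : x - lam 0 + (y - mu 0) = z - (lam 0 + mu 0) ↔ x + y = z := by
    rw [sub_add_sub_comm, sub_left_inj]
  refine formal_product_eq_of_nonneg L (lam := fun i => lam i - lam 0) (mu := fun j => mu j - mu 0)
    (nu := fun k => nu k - (lam 0 + mu 0)) (fun i j hij => sub_le_sub_right (hlam hij) _)
    (fun i j hij => sub_le_sub_right (hmu hij) _) (tendsto_atTop_add_const_right _ _ hlamtop)
    (tendsto_atTop_add_const_right _ _ hmutop) hA hB (fun i j hij => sub_lt_sub_right (hnu hij) _)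
    (fun i j => ?_) (fun i => sub_nonneg.2 (hlam i.zero_le)) (fun j => sub_nonneg.2 (hmu j.zero_le))
    ?_
  · obtain ⟨k, hk⟩ := hmem i j
    exact ⟨k, ((hshift _ _ _).2 hk.symm).symm⟩
  · simpa only [hshift, ← hc] using hC

end FormalProduct

end

/-- Hardy–Riesz multiplication theorem for (generalized) Dirichlet series at `z = 0`:
if `Σ a_k` and `Σ b_k` converge and the coefficient series `Σ c_k` of the formal
product of the Dirichlet series `Σ a_k e^{-λ_k z}` and `Σ b_k e^{-μ_k z}` converges,
then `Σ c_k = (Σ a_k)·(Σ b_k)`. -/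
theorem dirichlet_formal_product_at_zero
    (lam mu : ℕ → ℝ) (hlam : StrictMono lam) (hmu : StrictMono mu)
    (hlampos : ∀ k, 0 < lam k) (hmupos : ∀ k, 0 < mu k)
    (hlamtop : Tendsto lam atTop atTop) (hmutop : Tendsto mu atTop atTop)
    (a b : ℕ → ℂ) (A B : ℂ)
    (hA : Tendsto (fun n => ∑ k ∈ Finset.range n, a k) atTop (nhds A))
    (hB : Tendsto (fun n => ∑ k ∈ Finset.range n, b k) atTop (nhds B))
    (nu : ℕ → ℝ) (hnu : StrictMono nu) (hnutop : Tendsto nu atTop atTop)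
    (hnurange : Set.range nu = {x : ℝ | ∃ i j, lam i + mu j = x})
    (c : ℕ → ℂ)
    (hc : ∀ k, c k = ∑ᶠ p ∈ {p : ℕ × ℕ | lam p.1 + mu p.2 = nu k}, a p.1 * b p.2)
    (C : ℂ)
    (hC : Tendsto (fun n => ∑ k ∈ Finset.range n, c k) atTop (nhds C)) :
    C = A * B :=
  dirichlet_formal_product_at_zero_general (ContinuousLinearMap.mul ℝ ℂ) hlam.monotone hmu.monotone
    hlamtop hmutop hA hB hnu (fun i j => hnurange ▸ ⟨i, j, rfl⟩) hc hC
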